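/- Let 𝟘 = (0,…,0) and 𝟙 = (1,…,1) in {0,1}^N, and let p̲ be the minimal fixpoint of F_𝟘 in [0,l] and p̄ the maximal fixpoint of F_𝟙 in [0,l]. Then p̲ is the minimal element of S and p̄ is the maximal element of S: p̲, p̄ ∈ S and p̲ ≤ p ≤ p̄ for every p ∈ S. -/

import Mathlib

open Matrix

/-! For `p ∈ [0,l]`, the equity rules hold exactly when `V = G₊(p,V)`, so `V = H p` and `p` alone
decides whether it is clearing. A fixed point of any `F_b` is then a clearing vector, while a
clearing vector `p` need only satisfy `F_𝟘 p ≤ p ≤ F_𝟙 p`. Monotonicity of `x` makes `H` monotone,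
and together with `y ≤ x` and monotonicity of `y` this makes every `F_b` monotone. Knaster–Tarski on
`[0,p]` and on `[p,l]` therefore yields a fixed point of `F_𝟘` below `p` and a fixed point of `F_𝟙`
above `p`. -/

open Function Set

theorem exists_isFixedPt_mem_Icc {α : Type*} [ConditionallyCompleteLattice α] {a b : α}
    {f : α → α} (hab : a ≤ b) (hf : MonotoneOn f (Icc a b)) (ha : a ≤ f a) (hb : f b ≤ b) :
    ∃ q ∈ Icc a b, IsFixedPt f q := by
  have : Fact (a ≤ b) := ⟨hab⟩
  have hmaps : MapsTo f (Icc a b) (Icc a b) := fun _ hu =>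
    ⟨ha.trans (hf (left_mem_Icc.2 hab) hu hu.1), (hf hu (right_mem_Icc.2 hab) hu.2).trans hb⟩
  let g : Icc a b →o Icc a b := ⟨hmaps.restrict f _ _, fun u w huw => hf u.2 w.2 huw⟩
  exact ⟨g.lfp, g.lfp.2, congrArg Subtype.val g.map_lfp⟩

section Clearing

variable {ι : Type*}

/-- Clearing pairs `(p, V)` for asset values `x p V`, recovery values `y p V` of defaulting
institutions and nominal liabilities `l`. The maps `x` and `y` are arbitrary here; the linear ones
of the paper are `assetValue` and `recoveryValue`. -/
def IsClearingPair (x y : (ι → ℝ) → (ι → ℝ) → ι → ℝ) (l p V : ι → ℝ) : Prop :=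
  p ∈ Icc 0 l ∧ 0 ≤ V ∧ (∀ i, p i ≤ x p V i) ∧ (∀ i, p i = l i ∨ p i = y p V i) ∧
    ∀ i, (p i = l i → V i = x p V i - p i) ∧ (p i ≠ l i → V i = 0)

/-- The set `S` of clearing vectors. -/
def clearingVectors (x y : (ι → ℝ) → (ι → ℝ) → ι → ℝ) (l : ι → ℝ) : Set (ι → ℝ) :=
  {p | ∃ V, IsClearingPair x y l p V}

/-- The map `G₊` whose fixed points in `V` are the equity values compatible with payments `u`. -/
noncomputable def equityStep (x : (ι → ℝ) → (ι → ℝ) → ι → ℝ) (l u V : ι → ℝ) : ι → ℝ :=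
  fun i => max (x u V i - l i) 0 * if u i = l i then 1 else 0

/-- `H u` is, for each payment vector `u ∈ [0,l]`, the unique solution `V` of `V = G₊(u,V)`. -/
def IsEquityMap (x : (ι → ℝ) → (ι → ℝ) → ι → ℝ) (l : ι → ℝ) (H : (ι → ℝ) → ι → ℝ) : Prop :=
  ∀ u ∈ Icc 0 l, H u = equityStep x l u (H u) ∧ ∀ W, W = equityStep x l u W → W = H u

/-- The map `Φ_b`; the Boolean `b i` selects `Φ₀` (`false`) or `Φ₁` (`true`) in component `i`. -/
noncomputable def paymentStep (x y : (ι → ℝ) → (ι → ℝ) → ι → ℝ) (l : ι → ℝ) (b : ι → Bool)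
    (p V : ι → ℝ) : ι → ℝ := fun i =>
  let d : ℝ := if x p V i < l i then 1 else 0
  if b i then y p V i * d + l i * (1 - d) else min (y p V i) (l i)

/-- The map `F_b` on payment vectors, obtained from `Φ_b` by inserting the equity values `H p`. -/
noncomputable def clearingMap (x y : (ι → ℝ) → (ι → ℝ) → ι → ℝ) (l : ι → ℝ)
    (H : (ι → ℝ) → ι → ℝ) (b : ι → Bool) (p : ι → ℝ) : ι → ℝ :=
  paymentStep x y l b p (H p)

variable {x y : (ι → ℝ) → (ι → ℝ) → ι → ℝ} {l p q u w V W : ι → ℝ} {H : (ι → ℝ) → ι → ℝ}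
  {b : ι → Bool} {i : ι}

theorem equityStep_of_eq (h : u i = l i) : equityStep x l u V i = max (x u V i - l i) 0 := by
  simp [equityStep, h]

theorem equityStep_of_ne (h : u i ≠ l i) : equityStep x l u V i = 0 := by
  simp [equityStep, h]

theorem equityStep_nonneg : 0 ≤ equityStep x l u V := fun i => by
  by_cases h : u i = l i
  · exact equityStep_of_eq (x := x) h ▸ le_max_right _ _
  · exact (equityStep_of_ne h).ge

theorem equityStep_le_equityStep (hx : Monotone (uncurry x)) (huw : u ≤ w) (hwl : w ≤ l)
    (hVW : V ≤ W) : equityStep x l u V ≤ equityStep x l w W := fun i => by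
  by_cases hu : u i = l i
  · have hw : w i = l i := (hwl i).antisymm (hu ▸ huw i)
    rw [equityStep_of_eq hu, equityStep_of_eq hw]
    exact max_le_max_right _ (sub_le_sub_right (hx (Prod.mk_le_mk.2 ⟨huw, hVW⟩) i) _)
  · exact equityStep_of_ne (x := x) hu ▸ equityStep_nonneg i

theorem isClearingPair_iff_equityStep :
    IsClearingPair x y l p V ↔ V = equityStep x l p V ∧
      p ∈ Icc 0 l ∧ p ≤ x p V ∧ ∀ i, p i = l i ∨ p i = y p V i := by
  constructor
  · rintro ⟨hp, hV, hpx, hpriority, hequity⟩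
    refine ⟨funext fun i => ?_, hp, hpx, hpriority⟩
    by_cases hi : p i = l i
    · rw [equityStep_of_eq hi, ← hi, ← (hequity i).1 hi]
      exact (max_eq_left (hV i)).symm
    · rw [equityStep_of_ne hi, (hequity i).2 hi]
  · rintro ⟨hV, hp, hpx, hpriority⟩
    refine ⟨hp, hV ▸ equityStep_nonneg, hpx, hpriority, fun i => ⟨fun hi => ?_, fun hi => ?_⟩⟩
    · rw [congrFun hV i, equityStep_of_eq hi, ← hi, max_eq_left (sub_nonneg.2 (hpx i))]
    · rw [congrFun hV i, equityStep_of_ne hi]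

namespace IsEquityMap

theorem nonneg (hH : IsEquityMap x l H) (hu : u ∈ Icc 0 l) : 0 ≤ H u :=
  (hH u hu).1 ▸ equityStep_nonneg

theorem monotoneOn (hx : Monotone (uncurry x)) (hH : IsEquityMap x l H) :
    MonotoneOn H (Icc 0 l) := by
  intro u hu w hw huw
  -- `G₊(u, ·)` maps `[0, H w]` into itself, so its unique fixed point `H u` lies there.
  have hstep : equityStep x l u (H w) ≤ H w :=
    (equityStep_le_equityStep hx huw hw.2 le_rfl).trans_eq (hH w hw).1.symm
  obtain ⟨V, hV, hfix⟩ := exists_isFixedPt_mem_Icc (hH.nonneg hw)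
    (fun _ _ _ _ hVW => equityStep_le_equityStep hx le_rfl hu.2 hVW) equityStep_nonneg hstep
  exact (hH u hu).2 V hfix.symm ▸ hV.2

theorem mem_clearingVectors_iff (hH : IsEquityMap x l H) :
    p ∈ clearingVectors x y l ↔
      p ∈ Icc 0 l ∧ p ≤ x p (H p) ∧ ∀ i, p i = l i ∨ p i = y p (H p) i := by
  constructor
  · rintro ⟨V, hV⟩
    obtain ⟨hstep, hp, hclear⟩ := isClearingPair_iff_equityStep.1 hV
    obtain rfl := (hH p hp).2 V hstep
    exact ⟨hp, hclear⟩
  · intro h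
    exact ⟨H p, isClearingPair_iff_equityStep.2 ⟨(hH p h.1).1, h⟩⟩

end IsEquityMap

theorem paymentStep_of_false (hb : b i = false) :
    paymentStep x y l b p V i = min (y p V i) (l i) := by
  simp [paymentStep, hb]

theorem paymentStep_of_true (hb : b i = true) :
    paymentStep x y l b p V i = if x p V i < l i then y p V i else l i := by
  by_cases h : x p V i < l i <;> simp [paymentStep, hb, h]

theorem paymentStep_eq_or (hyx : y p V ≤ x p V) (i : ι) :
    paymentStep x y l b p V i = y p V i ∨ paymentStep x y l b p V i = l i ∧ l i ≤ x p V i := by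
  cases hb : b i
  · rw [paymentStep_of_false hb]
    rcases le_total (y p V i) (l i) with h | h
    · exact .inl (min_eq_left h)
    · exact .inr ⟨min_eq_right h, h.trans (hyx i)⟩
  · rw [paymentStep_of_true hb]
    split_ifs with h
    · exact .inl rfl
    · exact .inr ⟨rfl, not_lt.1 h⟩

theorem paymentStep_le_right (hyx : y p V ≤ x p V) : paymentStep x y l b p V ≤ l := fun i => by
  cases hb : b i
  · exact paymentStep_of_false (x := x) hb ▸ min_le_right _ _
  · rw [paymentStep_of_true hb]
    split_ifs with h
    · exact (hyx i).trans h.le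
    · exact le_rfl

theorem paymentStep_le_paymentStep (hyx : y p V ≤ x p V) (hx : x p V ≤ x q W)
    (hy : y p V ≤ y q W) : paymentStep x y l b p V ≤ paymentStep x y l b q W := fun i => by
  cases hb : b i
  · rw [paymentStep_of_false hb, paymentStep_of_false hb]
    exact min_le_min_right _ (hy i)
  · rw [paymentStep_of_true (p := q) hb]
    split_ifs with h
    · rw [paymentStep_of_true hb, if_pos ((hx i).trans_lt h)]
      exact hy i
    · exact paymentStep_le_right hyx i

theorem monotoneOn_clearingMap (hx : Monotone (uncurry x)) (hy : Monotone (uncurry y))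
    (hyx : ∀ p V, 0 ≤ p → 0 ≤ V → y p V ≤ x p V) (hH : IsEquityMap x l H) :
    MonotoneOn (clearingMap x y l H b) (Icc 0 l) := fun u hu w hw huw =>
  have huw' : (u, H u) ≤ (w, H w) := ⟨huw, hH.monotoneOn hx hu hw huw⟩
  paymentStep_le_paymentStep (hyx u _ hu.1 (hH.nonneg hu)) (hx huw') (hy huw')

theorem mem_clearingVectors_of_isFixedPt (hyx : ∀ p V, 0 ≤ p → 0 ≤ V → y p V ≤ x p V)
    (hH : IsEquityMap x l H) (hp : p ∈ Icc 0 l) (hfix : IsFixedPt (clearingMap x y l H b) p) :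
    p ∈ clearingVectors x y l := by
  have hyxp : y p (H p) ≤ x p (H p) := hyx p _ hp.1 (hH.nonneg hp)
  have hor (i : ι) : p i = y p (H p) i ∨ p i = l i ∧ l i ≤ x p (H p) i := by
    have hpi : paymentStep x y l b p (H p) i = p i := congrFun hfix i
    exact hpi ▸ paymentStep_eq_or hyxp i
  refine hH.mem_clearingVectors_iff.2 ⟨hp, fun i => ?_, fun i => ?_⟩
  · exact (hor i).elim (fun h => h.le.trans (hyxp i)) fun h => h.1.le.trans h.2
  · exact (hor i).symm.imp_left And.left

theorem clearingMap_false_le (hH : IsEquityMap x l H) (hp : p ∈ clearingVectors x y l) :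
    clearingMap x y l H (fun _ => false) p ≤ p := fun i => by
  obtain ⟨-, -, hpriority⟩ := hH.mem_clearingVectors_iff.1 hp
  rw [clearingMap, paymentStep_of_false rfl]
  exact min_le_iff.2 ((hpriority i).symm.imp Eq.ge Eq.ge)

theorem le_clearingMap_true (hH : IsEquityMap x l H) (hp : p ∈ clearingVectors x y l) :
    p ≤ clearingMap x y l H (fun _ => true) p := fun i => by
  obtain ⟨hpI, hpx, hpriority⟩ := hH.mem_clearingVectors_iff.1 hp
  rw [clearingMap, paymentStep_of_true rfl]
  split_ifs with hdefault
  · exact ((hpriority i).resolve_left ((hpx i).trans_lt hdefault).ne).le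
  · exact hpI.2 i

theorem exists_isFixedPt_clearingMap_false_le (hx : Monotone (uncurry x))
    (hy : Monotone (uncurry y)) (hy0 : 0 ≤ y 0 0)
    (hyx : ∀ p V, 0 ≤ p → 0 ≤ V → y p V ≤ x p V) (hH : IsEquityMap x l H)
    (hp : p ∈ clearingVectors x y l) :
    ∃ q ∈ Icc 0 l, IsFixedPt (clearingMap x y l H fun _ => false) q ∧ q ≤ p := by
  have hpI : p ∈ Icc 0 l := (hH.mem_clearingVectors_iff.1 hp).1
  have hl : 0 ≤ l := hpI.1.trans hpI.2
  have hzero : 0 ≤ clearingMap x y l H (fun _ => false) 0 := fun i => by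
    have hy0H : y 0 0 ≤ y 0 (H 0) :=
      hy (Prod.mk_le_mk.2 ⟨le_rfl, hH.nonneg (left_mem_Icc.2 hl)⟩)
    rw [clearingMap, paymentStep_of_false rfl]
    exact le_min (hy0.trans hy0H i) (hl i)
  obtain ⟨q, hq, hfix⟩ := exists_isFixedPt_mem_Icc hpI.1
    ((monotoneOn_clearingMap hx hy hyx hH).mono (Icc_subset_Icc_right hpI.2)) hzero
    (clearingMap_false_le hH hp)
  exact ⟨q, ⟨hq.1, hq.2.trans hpI.2⟩, hfix, hq.2⟩

theorem exists_isFixedPt_clearingMap_true_ge (hx : Monotone (uncurry x))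
    (hy : Monotone (uncurry y)) (hyx : ∀ p V, 0 ≤ p → 0 ≤ V → y p V ≤ x p V)
    (hH : IsEquityMap x l H) (hp : p ∈ clearingVectors x y l) :
    ∃ q ∈ Icc 0 l, IsFixedPt (clearingMap x y l H fun _ => true) q ∧ p ≤ q := by
  have hpI : p ∈ Icc 0 l := (hH.mem_clearingVectors_iff.1 hp).1
  have hl : 0 ≤ l := hpI.1.trans hpI.2
  have htop : clearingMap x y l H (fun _ => true) l ≤ l :=
    paymentStep_le_right (hyx l _ hl (hH.nonneg (right_mem_Icc.2 hl)))
  obtain ⟨q, hq, hfix⟩ := exists_isFixedPt_mem_Icc hpI.2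
    ((monotoneOn_clearingMap hx hy hyx hH).mono (Icc_subset_Icc_left hpI.1))
    (le_clearingMap_true hH hp) htop
  exact ⟨q, ⟨hpI.1.trans hq.1, hq.2⟩, hfix, hq.1⟩

theorem stmt8_general (hx : Monotone (uncurry x)) (hy : Monotone (uncurry y)) (hy0 : 0 ≤ y 0 0)
    (hyx : ∀ p V, 0 ≤ p → 0 ≤ V → y p V ≤ x p V) (hH : IsEquityMap x l H) {plow pbar : ι → ℝ}
    (hplow : IsLeast (Icc 0 l ∩ fixedPoints (clearingMap x y l H fun _ => false)) plow)
    (hpbar : IsGreatest (Icc 0 l ∩ fixedPoints (clearingMap x y l H fun _ => true)) pbar) :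
    IsLeast (clearingVectors x y l) plow ∧ IsGreatest (clearingVectors x y l) pbar := by
  refine ⟨⟨mem_clearingVectors_of_isFixedPt hyx hH hplow.1.1 hplow.1.2, fun p hp => ?_⟩,
    ⟨mem_clearingVectors_of_isFixedPt hyx hH hpbar.1.1 hpbar.1.2, fun p hp => ?_⟩⟩
  · obtain ⟨q, hq, hfix, hqp⟩ := exists_isFixedPt_clearingMap_false_le hx hy hy0 hyx hH hp
    exact (hplow.2 ⟨hq, hfix⟩).trans hqp
  · obtain ⟨q, hq, hfix, hpq⟩ := exists_isFixedPt_clearingMap_true_ge hx hy hyx hH hp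
    exact hpq.trans (hpbar.2 ⟨hq, hfix⟩)

end Clearing

theorem monotone_mulVec_of_nonneg {m n R : Type*} [Fintype n] [Semiring R] [PartialOrder R]
    [IsOrderedRing R] {M : Matrix m n R} (hM : ∀ i j, 0 ≤ M i j) : Monotone (M *ᵥ ·) :=
  fun _ _ huw i => dotProduct_le_dotProduct_of_nonneg_left huw (hM i)

section LinearValues

variable {ι : Type*} [Fintype ι] {e : ι → ℝ} {P Th : Matrix ι ι ℝ} {α β γ : ℝ}

/-- The linear asset value `x(p,V) = e + Π'p + Θ'V`. -/
def assetValue (e : ι → ℝ) (P Th : Matrix ι ι ℝ) (p V : ι → ℝ) : ι → ℝ :=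
  e + Pᵀ *ᵥ p + Thᵀ *ᵥ V

/-- The linear recovery value `y(p,V) = αe + βΠ'p + γΘ'V`. -/
def recoveryValue (α β γ : ℝ) (e : ι → ℝ) (P Th : Matrix ι ι ℝ) (p V : ι → ℝ) : ι → ℝ :=
  α • e + β • Pᵀ *ᵥ p + γ • Thᵀ *ᵥ V

theorem assetValue_eq_recoveryValue : assetValue e P Th = recoveryValue 1 1 1 e P Th := by
  funext p V
  simp only [assetValue, recoveryValue, one_smul]

theorem monotone_recoveryValue (hP : ∀ i j, 0 ≤ P i j) (hTh : ∀ i j, 0 ≤ Th i j) (hβ : 0 ≤ β)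
    (hγ : 0 ≤ γ) : Monotone (uncurry (recoveryValue α β γ e P Th)) := by
  have hPmono : Monotone (Pᵀ *ᵥ ·) := monotone_mulVec_of_nonneg fun i j => hP j i
  have hThmono : Monotone (Thᵀ *ᵥ ·) := monotone_mulVec_of_nonneg fun i j => hTh j i
  rintro ⟨p, V⟩ ⟨q, W⟩ ⟨hpq, hVW⟩
  exact add_le_add (add_le_add_right (smul_le_smul_of_nonneg_left (hPmono hpq) hβ) _)
    (smul_le_smul_of_nonneg_left (hThmono hVW) hγ)

theorem monotone_assetValue (hP : ∀ i j, 0 ≤ P i j) (hTh : ∀ i j, 0 ≤ Th i j) :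
    Monotone (uncurry (assetValue e P Th)) := by
  rw [assetValue_eq_recoveryValue]
  exact monotone_recoveryValue hP hTh zero_le_one zero_le_one

theorem recoveryValue_zero_zero_nonneg (he : 0 ≤ e) (hα : 0 ≤ α) :
    0 ≤ recoveryValue α β γ e P Th 0 0 := by
  simpa only [recoveryValue, mulVec_zero, smul_zero, add_zero] using smul_nonneg hα he

theorem recoveryValue_le_assetValue (he : 0 ≤ e) (hP : ∀ i j, 0 ≤ P i j)
    (hTh : ∀ i j, 0 ≤ Th i j) (hα : α ≤ 1) (hβ : β ≤ 1) (hγ : γ ≤ 1) {p V : ι → ℝ} (hp : 0 ≤ p)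
    (hV : 0 ≤ V) : recoveryValue α β γ e P Th p V ≤ assetValue e P Th p V := by
  have hPp : 0 ≤ Pᵀ *ᵥ p := by
    simpa only [mulVec_zero] using monotone_mulVec_of_nonneg (M := Pᵀ) (fun i j => hP j i) hp
  have hThV : 0 ≤ Thᵀ *ᵥ V := by
    simpa only [mulVec_zero] using monotone_mulVec_of_nonneg (M := Thᵀ) (fun i j => hTh j i) hV
  exact add_le_add (add_le_add (smul_le_of_le_one_left he hα) (smul_le_of_le_one_left hPp hβ))
    (smul_le_of_le_one_left hThV hγ)

end LinearValues

/-- Let `𝟘` and `𝟙` be the all-zeros and all-ones binary vectors, and let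
`p̲` be the minimal fixpoint of `F_𝟘` in `[0,l]` and `p̄` the maximal fixpoint of
`F_𝟙` in `[0,l]`. Then `p̲` is the minimal element of `S` and `p̄` is the maximal
element of `S`: `p̲, p̄ ∈ S` and `p̲ ≤ p ≤ p̄` for every `p ∈ S`. -/
theorem stmt8 (N : ℕ) (hN : 1 < N)
    (e l : Fin N → ℝ) (he : 0 ≤ e) (hl : 0 ≤ l)
    (P Th : Matrix (Fin N) (Fin N) ℝ)
    (hP : ∀ i j, 0 ≤ P i j) (hProw : ∀ i, ∑ j, P i j = 1)
    (hTh : ∀ i j, 0 ≤ Th i j) (hThrow : ∀ i, ∑ j, Th i j ≤ 1)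
    (α β γ : ℝ) (hα : α ∈ Set.Icc (0:ℝ) 1) (hβ : β ∈ Set.Icc (0:ℝ) 1)
    (hγ : γ ∈ Set.Icc (0:ℝ) 1)
    (Clearing : (Fin N → ℝ) → (Fin N → ℝ) → Prop)
    (hClearing : ∀ p V : Fin N → ℝ, Clearing p V ↔
      (p ∈ Set.Icc (0 : Fin N → ℝ) l ∧ 0 ≤ V ∧
      (∀ i, p i ≤ e i + P.transpose.mulVec p i + Th.transpose.mulVec V i) ∧
      (∀ i, p i = l i ∨
        p i = α * e i + β * P.transpose.mulVec p i + γ * Th.transpose.mulVec V i) ∧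
      (∀ i, (p i = l i →
          V i = e i + P.transpose.mulVec p i + Th.transpose.mulVec V i - p i) ∧
        (p i ≠ l i → V i = 0))))
    (S : Set (Fin N → ℝ))
    (hS : S = {p : Fin N → ℝ | ∃ V : Fin N → ℝ, Clearing p V})
    (Gp : (Fin N → ℝ) → (Fin N → ℝ) → Fin N → ℝ)
    (hGp : Gp = fun u V i =>
      max (e i + P.transpose.mulVec u i + Th.transpose.mulVec V i - l i) 0 *
        (if u i = l i then (1 : ℝ) else 0))
    (H : (Fin N → ℝ) → Fin N → ℝ)
    (hH : ∀ u ∈ Set.Icc (0 : Fin N → ℝ) l,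
      H u = Gp u (H u) ∧ ∀ W : Fin N → ℝ, W = Gp u W → W = H u)
    (F : (Fin N → Bool) → (Fin N → ℝ) → Fin N → ℝ)
    (hF : F = fun b p i =>
      let V := H p
      let xi := e i + P.transpose.mulVec p i + Th.transpose.mulVec V i
      let yi := α * e i + β * P.transpose.mulVec p i + γ * Th.transpose.mulVec V i
      let di : ℝ := if xi < l i then 1 else 0
      if b i then yi * di + l i * (1 - di) else min yi (l i))
    (plow pbar : Fin N → ℝ)
    -- `plow` is the minimal fixpoint of `F_𝟘` in `[0,l]`
    (hplow : plow ∈ Set.Icc (0 : Fin N → ℝ) l ∧ plow = F (fun _ => false) plow ∧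
      ∀ q ∈ Set.Icc (0 : Fin N → ℝ) l, q = F (fun _ => false) q → plow ≤ q)
    -- `pbar` is the maximal fixpoint of `F_𝟙` in `[0,l]`
    (hpbar : pbar ∈ Set.Icc (0 : Fin N → ℝ) l ∧ pbar = F (fun _ => true) pbar ∧
      ∀ q ∈ Set.Icc (0 : Fin N → ℝ) l, q = F (fun _ => true) q → q ≤ pbar) :
    plow ∈ S ∧ pbar ∈ S ∧ ∀ p ∈ S, plow ≤ p ∧ p ≤ pbar := by
  obtain rfl : Clearing = IsClearingPair (assetValue e P Th) (recoveryValue α β γ e P Th) l :=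
    funext₂ fun p V => propext (hClearing p V)
  subst hS hGp hF
  obtain ⟨hlow, hbar⟩ := stmt8_general (monotone_assetValue hP hTh)
    (monotone_recoveryValue hP hTh hβ.1 hγ.1) (recoveryValue_zero_zero_nonneg he hα.1)
    (fun _ _ => recoveryValue_le_assetValue he hP hTh hα.2 hβ.2 hγ.2) hH
    ⟨⟨hplow.1, hplow.2.1.symm⟩, fun q hq => hplow.2.2 q hq.1 hq.2.symm⟩
    ⟨⟨hpbar.1, hpbar.2.1.symm⟩, fun q hq => hpbar.2.2 q hq.1 hq.2.symm⟩
  exact ⟨hlow.1, hbar.1, fun p hp => ⟨hlow.2 hp, hbar.2 hp⟩⟩
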